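/- arXiv:1704.02153 — 12 statements merged into one kernel-verified Lean document; each statement's English description precedes it below -/
import Mathlib

section
/- Let A = (a_{ijk}) be a third-order n-dimensional real tensor (n ≥ 1) satisfying a_{ijk} = a_{ikj} for all i, j, k (a piezoelectric-type tensor). Then there exist a real number λ and vectors x, y ∈ ℝ^n with Σ_{j,k} a_{ijk} y_j y_k = λ x_i for all i, Σ_{j,k} a_{jki} x_j y_k = λ y_i for all i, xᵀx = 1, and yᵀy = 1; that is, A always has a C-eigenvalue with associated left and right C-eigenvectors. -/
open Finset

/-- `λ` is a C-eigenvalue of the piezoelectric-type tensor `a` with left C-eigenvector `x`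
and right C-eigenvector `y`:
`A y y = λ x`, `x A y = λ y`, `xᵀ x = 1`, `yᵀ y = 1`. -/
def CEig {n : ℕ} (a : Fin n → Fin n → Fin n → ℝ) (lam : ℝ) (x y : Fin n → ℝ) : Prop :=
  (∀ i, ∑ j, ∑ k, a i j k * y j * y k = lam * x i) ∧
  (∀ i, ∑ j, ∑ k, a j k i * x j * y k = lam * y i) ∧
  (∑ i, x i * x i = 1) ∧ (∑ i, y i * y i = 1)

/-- The trilinear form of the tensor. -/
def triF {n : ℕ} (a : Fin n → Fin n → Fin n → ℝ) (x y z : Fin n → ℝ) : ℝ :=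
  ∑ i, ∑ j, ∑ k, a i j k * x i * y j * z k

theorem triF_comm {n : ℕ} (a : Fin n → Fin n → Fin n → ℝ)
    (hA : ∀ i j k, a i j k = a i k j) (x y z : Fin n → ℝ) : triF a x y z = triF a x z y := by
  unfold triF
  refine Finset.sum_congr rfl fun i _ => ?_
  rw [Finset.sum_comm]
  refine Finset.sum_congr rfl fun j _ => Finset.sum_congr rfl fun k _ => ?_
  rw [hA i k j]; ring

theorem triF_smul1 {n : ℕ} (a : Fin n → Fin n → Fin n → ℝ) (c : ℝ) (x y z : Fin n → ℝ) :
    triF a (fun i => c * x i) y z = c * triF a x y z := by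
  unfold triF
  simp only [Finset.mul_sum]
  refine Finset.sum_congr rfl fun i _ => Finset.sum_congr rfl fun j _ =>
    Finset.sum_congr rfl fun k _ => ?_
  ring

theorem triF_lin3 {n : ℕ} (a : Fin n → Fin n → Fin n → ℝ) (c d : ℝ) (x y z w : Fin n → ℝ) :
    triF a x y (fun i => c * z i + d * w i) = c * triF a x y z + d * triF a x y w := by
  unfold triF
  simp only [Finset.mul_sum, ← Finset.sum_add_distrib]
  refine Finset.sum_congr rfl fun i _ => Finset.sum_congr rfl fun j _ =>
    Finset.sum_congr rfl fun k _ => ?_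
  ring

theorem triF_quad {n : ℕ} (a : Fin n → Fin n → Fin n → ℝ)
    (hA : ∀ i j k, a i j k = a i k j) (c d : ℝ) (x z w : Fin n → ℝ) :
    triF a x (fun i => c * z i + d * w i) (fun i => c * z i + d * w i)
      = c ^ 2 * triF a x z z + 2 * c * d * triF a x z w + d ^ 2 * triF a x w w := by
  rw [triF_lin3, triF_comm a hA x _ z, triF_comm a hA x _ w, triF_lin3, triF_lin3,
    triF_comm a hA x w z]
  ring

theorem sq_quad {n : ℕ} (c d : ℝ) (z w : Fin n → ℝ) :
    ∑ i, (c * z i + d * w i) * (c * z i + d * w i)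
      = c ^ 2 * ∑ i, z i * z i + 2 * c * d * ∑ i, z i * w i + d ^ 2 * ∑ i, w i * w i := by
  simp only [Finset.mul_sum, ← Finset.sum_add_distrib]
  refine Finset.sum_congr rfl fun i _ => ?_
  ring

theorem exists_max {n : ℕ} (hn : 1 ≤ n) (a : Fin n → Fin n → Fin n → ℝ) :
    ∃ x y : Fin n → ℝ, ∑ i, x i * x i = 1 ∧ ∑ i, y i * y i = 1 ∧
      ∀ z w : Fin n → ℝ, ∑ i, z i * z i = 1 → ∑ i, w i * w i = 1 →
        triF a z w w ≤ triF a x y y := by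
  let S : Set ((Fin n → ℝ) × (Fin n → ℝ)) :=
    {p | ∑ i, p.1 i * p.1 i = 1 ∧ ∑ i, p.2 i * p.2 i = 1}
  have hcl : IsClosed S :=
    (isClosed_eq (by fun_prop) (by fun_prop)).inter (isClosed_eq (by fun_prop) (by fun_prop))
  have hb : ∀ z : Fin n → ℝ, ∑ i, z i * z i = 1 → ∀ i, -1 ≤ z i ∧ z i ≤ 1 := by
    intro z hz i
    have := Finset.single_le_sum (f := fun i => z i * z i)
      (fun i _ => mul_self_nonneg (z i)) (Finset.mem_univ i)
    simp only [hz] at this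
    constructor <;> nlinarith
  have hS : IsCompact S := by
    refine (isCompact_Icc (a := ((fun _ => -1, fun _ => -1) : (Fin n → ℝ) × (Fin n → ℝ)))
      (b := (fun _ => 1, fun _ => 1))).of_isClosed_subset hcl ?_
    rintro ⟨z, w⟩ ⟨hz, hw⟩
    exact ⟨⟨fun i => (hb z hz i).1, fun i => (hb w hw i).1⟩,
      ⟨fun i => (hb z hz i).2, fun i => (hb w hw i).2⟩⟩
  have hne : S.Nonempty := by
    have h1 : ∑ i, (Pi.single ⟨0, hn⟩ 1 : Fin n → ℝ) i * (Pi.single ⟨0, hn⟩ 1 : Fin n → ℝ) i = 1 := by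
      simp [Pi.single_apply]
    exact ⟨(Pi.single ⟨0, hn⟩ 1, Pi.single ⟨0, hn⟩ 1), h1, h1⟩
  have hf : Continuous (fun p : (Fin n → ℝ) × (Fin n → ℝ) => triF a p.1 p.2 p.2) := by
    unfold triF; fun_prop
  obtain ⟨p, hp, hm⟩ := hS.exists_isMaxOn hne hf.continuousOn
  refine ⟨p.1, p.2, hp.1, hp.2, fun z w hz hw => ?_⟩
  have hzw : (z, w) ∈ S := ⟨hz, hw⟩
  exact isMaxOn_iff.mp hm (z, w) hzw

theorem exists_scale {n : ℕ} (w : Fin n → ℝ) (hw : ∑ i, w i * w i ≠ 0) :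
    ∃ s : ℝ, 0 < s ∧ s ^ 2 * ∑ i, w i * w i = 1 := by
  have h0 : 0 < ∑ i, w i * w i :=
    lt_of_le_of_ne (Finset.sum_nonneg fun i _ => mul_self_nonneg _) (Ne.symm hw)
  refine ⟨(Real.sqrt (∑ i, w i * w i))⁻¹, by positivity, ?_⟩
  rw [inv_pow, Real.sq_sqrt h0.le, inv_mul_cancel₀ hw]

theorem eq_zero_of_sq {n : ℕ} (w : Fin n → ℝ) (hw : ∑ i, w i * w i ≤ 0) (i : Fin n) :
    w i = 0 := by
  have := Finset.single_le_sum (f := fun i => w i * w i)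
      (fun i _ => mul_self_nonneg (w i)) (Finset.mem_univ i)
  nlinarith

/-- Every piezoelectric-type tensor has a C-eigenvalue with associated left and right
C-eigenvectors. -/
theorem stmt0 {n : ℕ} (hn : 1 ≤ n) (a : Fin n → Fin n → Fin n → ℝ)
    (hA : ∀ i j k, a i j k = a i k j) :
    ∃ (lam : ℝ) (x y : Fin n → ℝ), CEig a lam x y := by
  obtain ⟨x, y, hx, hy, hm⟩ := exists_max hn a
  obtain ⟨L, hL⟩ : ∃ L, L = triF a x y y := ⟨_, rfl⟩
  rw [← hL] at hm
  have hL0 : 0 ≤ L := by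
    have := hm (fun i => (-1) * x i) y (by simpa using hx) hy
    rw [triF_smul1] at this
    linarith
  refine ⟨L, x, y, ?_, ?_, hx, hy⟩
  · let v : Fin n → ℝ := fun i => ∑ j, ∑ k, a i j k * y j * y k
    have hv : ∀ z, triF a z y y = ∑ i, z i * v i := by
      intro z
      simp only [triF, v, Finset.mul_sum]
      refine Finset.sum_congr rfl fun i _ => Finset.sum_congr rfl fun j _ =>
        Finset.sum_congr rfl fun k _ => ?_
      ring
    have hvv : ∑ i, v i * v i ≤ L ^ 2 := by
      by_cases h : ∑ i, v i * v i = 0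
      · rw [h]; positivity
      obtain ⟨s, hs, hs1⟩ := exists_scale v h
      have h1 := hm (fun i => s * v i) y (by
        rw [← hs1, Finset.mul_sum]
        exact Finset.sum_congr rfl fun i _ => by ring) hy
      rw [triF_smul1, hv] at h1
      have h2 : 0 ≤ s * ∑ i, v i * v i :=
        mul_nonneg hs.le (Finset.sum_nonneg fun i _ => mul_self_nonneg _)
      have h3 : (s * ∑ i, v i * v i) ^ 2 ≤ L ^ 2 := by gcongr
      have h4 : (s * ∑ i, v i * v i) ^ 2 = (s ^ 2 * ∑ i, v i * v i) * ∑ i, v i * v i := by ring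
      rw [h4, hs1, one_mul] at h3
      exact h3
    intro i
    have h := eq_zero_of_sq (fun i => 1 * v i + (-L) * x i) (by
      rw [sq_quad, hx]
      have : ∑ i, v i * x i = L := by
        rw [hL, hv]; exact Finset.sum_congr rfl fun i _ => by ring
      rw [this]; nlinarith) i
    simp only [v] at h
    linarith
  · let u : Fin n → ℝ := fun i => ∑ j, ∑ k, a j k i * x j * y k
    have hu : ∀ w, triF a x y w = ∑ i, w i * u i := by
      intro w
      simp only [triF, u, Finset.mul_sum]
      have : ∀ i : Fin n, ∑ j, ∑ k, a i j k * x i * y j * w k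
          = ∑ k, ∑ j, a i j k * x i * y j * w k := fun i => Finset.sum_comm
      simp only [this]
      rw [Finset.sum_comm]
      refine Finset.sum_congr rfl fun i _ => Finset.sum_congr rfl fun j _ =>
        Finset.sum_congr rfl fun k _ => ?_
      ring
    have hq : ∀ w : Fin n → ℝ, triF a x w w ≤ L * ∑ i, w i * w i := by
      intro w
      by_cases h : ∑ i, w i * w i = 0
      · have hw : w = fun _ => 0 := funext fun i => eq_zero_of_sq w h.le i
        subst hw
        simp [triF]
      obtain ⟨s, hs, hs1⟩ := exists_scale w h
      have h1 := hm x (fun i => s * w i + 0 * w i) hx (by rw [sq_quad, ← hs1]; ring)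
      rw [triF_quad a hA] at h1
      have h2 : s ^ 2 * triF a x w w ≤ s ^ 2 * (L * ∑ i, w i * w i) := by
        have : s ^ 2 * (L * ∑ i, w i * w i) = L := by
          linear_combination L * hs1
        rw [this]; linarith
      exact le_of_mul_le_mul_left h2 (by positivity)
    let e : Fin n → ℝ := fun i => 1 * u i + (-L) * y i
    have hB : ∑ i, e i * e i = triF a x y e - L * ∑ i, y i * e i := by
      rw [hu, Finset.mul_sum, ← Finset.sum_sub_distrib]
      exact Finset.sum_congr rfl fun i _ => by simp only [e]; ring
    have key : ∀ t : ℝ, 2 * t * (∑ i, e i * e i) ≤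
        t ^ 2 * (L * ∑ i, e i * e i - triF a x e e) := by
      intro t
      have h := hq (fun i => 1 * y i + t * e i)
      rw [triF_quad a hA, sq_quad, hy, ← hL] at h
      rw [hB] at *
      nlinarith
    have he : ∑ i, e i * e i ≤ 0 := by
      by_contra! hc
      obtain ⟨R, hR⟩ : ∃ R, R = L * ∑ i, e i * e i - triF a x e e := ⟨_, rfl⟩
      rw [← hR] at key
      generalize ∑ i, e i * e i = E at key hc
      have hR0 : 0 < R := by have := key 1; linarith
      have h := key (E / R)
      have h2 : (E / R) ^ 2 * R = (E / R) * E := by field_simp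
      have h3 : 0 < E / R * E := by positivity
      rw [h2] at h
      linarith
    intro i
    have h := eq_zero_of_sq e he i
    simp only [e, u] at h
    linarith
end

section
/- Let A = (a_{ijk}) ∈ ℝ^{n×n×n} be a piezoelectric-type tensor and suppose λ* is the largest C-eigenvalue of A (i.e., λ* is a C-eigenvalue and every C-eigenvalue λ of A satisfies λ ≤ λ*). Then λ* = max{ Σ_{i,j,k} a_{ijk} x_i y_j y_k : x, y ∈ ℝ^n, xᵀx = 1, yᵀy = 1 }. -/
open Finset

lemma lin_zero (p K : ℝ) (h : ∀ t : ℝ, 2 * t * p + t ^ 2 * K ≤ 0) : p = 0 := by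
  have h1 := h (p / (|K| + 1))
  have hk : 0 < |K| + 1 := by positivity
  have hK := neg_abs_le K
  have e : 2 * (p / (|K| + 1)) * p + (p / (|K| + 1)) ^ 2 * K
      = p ^ 2 * (2 * (|K| + 1) + K) / (|K| + 1) ^ 2 := by
    field_simp
  rw [e] at h1
  by_contra hp
  have : 0 < p ^ 2 * (2 * (|K| + 1) + K) / (|K| + 1) ^ 2 := by
    have : 0 < 2 * (|K| + 1) + K := by linarith
    positivity
  linarith

lemma dot_self_pos {n : ℕ} (v : Fin n → ℝ) : 0 ≤ v ⬝ᵥ v :=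
  Finset.sum_nonneg fun i _ => mul_self_nonneg (v i)

lemma lin_crit {n : ℕ} (c x0 : Fin n → ℝ) (M : ℝ) (hx0 : x0 ⬝ᵥ x0 = 1)
    (hM : c ⬝ᵥ x0 = M) (h : ∀ x : Fin n → ℝ, x ⬝ᵥ x = 1 → c ⬝ᵥ x ≤ M) : c = M • x0 := by
  have hM0 : 0 ≤ M := by
    have := h (-x0) (by simpa using hx0)
    rw [dotProduct_neg, hM] at this
    linarith
  have hc : c ⬝ᵥ c ≤ M ^ 2 := by
    by_cases h0 : c ⬝ᵥ c = 0
    · rw [h0]; positivity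
    · have hpos : 0 < c ⬝ᵥ c := lt_of_le_of_ne (dot_self_pos c) (Ne.symm h0)
      have hs := Real.sqrt_pos.2 hpos
      have hsq := Real.mul_self_sqrt hpos.le
      set s := Real.sqrt (c ⬝ᵥ c) with hsdef
      have := h (s⁻¹ • c) (by
        rw [smul_dotProduct, dotProduct_smul, ← hsq, smul_eq_mul, smul_eq_mul]
        field_simp)
      rw [dotProduct_smul, ← hsq, smul_eq_mul] at this
      have e : s⁻¹ * (s * s) = s := by field_simp
      rw [e] at this
      rw [← hsq]
      nlinarith
  have : (c - M • x0) ⬝ᵥ (c - M • x0) = 0 := by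
    apply le_antisymm _ (dot_self_pos _)
    simp only [sub_dotProduct, dotProduct_sub, smul_dotProduct, dotProduct_smul, smul_eq_mul,
      dotProduct_comm x0 c, hM, hx0]
    nlinarith
  exact sub_eq_zero.1 (dotProduct_self_eq_zero.1 this)

open Matrix in
lemma quad_crit {n : ℕ} (B : Matrix (Fin n) (Fin n) ℝ) (hB : Bᵀ = B) (y0 : Fin n → ℝ) (M : ℝ)
    (hy0 : y0 ⬝ᵥ y0 = 1) (hM : y0 ⬝ᵥ (B *ᵥ y0) = M)
    (h : ∀ y : Fin n → ℝ, y ⬝ᵥ y = 1 → y ⬝ᵥ (B *ᵥ y) ≤ M) : B *ᵥ y0 = M • y0 := by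
  have hall : ∀ y : Fin n → ℝ, y ⬝ᵥ (B *ᵥ y) ≤ M * (y ⬝ᵥ y) := by
    intro y
    by_cases h0 : y ⬝ᵥ y = 0
    · have : y = 0 := dotProduct_self_eq_zero.1 h0
      simp [this]
    · have hpos : 0 < y ⬝ᵥ y := lt_of_le_of_ne (dot_self_pos y) (Ne.symm h0)
      have hs := Real.sqrt_pos.2 hpos
      have hsq := Real.mul_self_sqrt hpos.le
      set s := Real.sqrt (y ⬝ᵥ y) with hsdef
      have := h (s⁻¹ • y) (by
        rw [smul_dotProduct, dotProduct_smul, ← hsq, smul_eq_mul, smul_eq_mul]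
        field_simp)
      rw [mulVec_smul, smul_dotProduct, dotProduct_smul, smul_eq_mul, smul_eq_mul] at this
      rw [← hsq]
      have e : y ⬝ᵥ (B *ᵥ y) = (s * s) * (s⁻¹ * (s⁻¹ * (y ⬝ᵥ (B *ᵥ y)))) := by field_simp
      rw [e, mul_comm M]
      exact mul_le_mul_of_nonneg_left this (by positivity)
  set w := B *ᵥ y0 - M • y0 with hw
  have hsymm : y0 ⬝ᵥ (B *ᵥ w) = w ⬝ᵥ (B *ᵥ y0) := by
    rw [dotProduct_mulVec, ← mulVec_transpose, hB, dotProduct_comm]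
  have hp : w ⬝ᵥ (B *ᵥ y0) - M * (w ⬝ᵥ y0) = w ⬝ᵥ w := by
    conv_rhs => rw [hw, dotProduct_sub, ← hw, dotProduct_smul, smul_eq_mul]
  have : w ⬝ᵥ w = 0 := by
    apply lin_zero _ (w ⬝ᵥ (B *ᵥ w) - M * (w ⬝ᵥ w))
    intro t
    have := hall (y0 + t • w)
    simp only [mulVec_add, mulVec_smul, add_dotProduct, dotProduct_add, smul_dotProduct,
      dotProduct_smul, smul_eq_mul, hsymm, hM, hy0, dotProduct_comm y0 w] at this
    rw [← hp] at this ⊢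
    nlinarith
  exact sub_eq_zero.1 (dotProduct_self_eq_zero.1 this)

lemma isCompact_unit (n : ℕ) : IsCompact {x : Fin n → ℝ | ∑ i, x i * x i = 1} := by
  apply (isCompact_Icc (a := fun _ : Fin n => (-1 : ℝ)) (b := fun _ => 1)).of_isClosed_subset
  · exact isClosed_eq (by fun_prop) continuous_const
  · intro x hx
    have hx : ∑ i, x i * x i = 1 := hx
    have : ∀ i, x i * x i ≤ 1 := fun i => by
      rw [← hx]
      exact Finset.single_le_sum (f := fun i => x i * x i)
        (fun j _ => mul_self_nonneg (x j)) (Finset.mem_univ i)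
    constructor <;> intro i <;> have := this i <;> simp only <;> nlinarith

lemma F_lin {n : ℕ} (a : Fin n → Fin n → Fin n → ℝ) (x y : Fin n → ℝ) :
    ∑ i, ∑ j, ∑ k, a i j k * x i * y j * y k
      = (fun i => ∑ j, ∑ k, a i j k * y j * y k) ⬝ᵥ x := by
  simp only [dotProduct, Finset.sum_mul]
  refine Finset.sum_congr rfl fun i _ => Finset.sum_congr rfl fun j _ =>
    Finset.sum_congr rfl fun k _ => by ring

open Matrix in
lemma F_quad {n : ℕ} (a : Fin n → Fin n → Fin n → ℝ) (x y : Fin n → ℝ) :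
    ∑ i, ∑ j, ∑ k, a i j k * x i * y j * y k
      = y ⬝ᵥ ((Matrix.of fun j k => ∑ i, a i j k * x i) *ᵥ y) := by
  simp only [dotProduct, mulVec, Matrix.of_apply, Finset.sum_mul, Finset.mul_sum]
  rw [Finset.sum_comm]
  refine Finset.sum_congr rfl fun j _ => ?_
  rw [Finset.sum_comm]
  refine Finset.sum_congr rfl fun k _ => Finset.sum_congr rfl fun i _ => by ring

/-- The largest C-eigenvalue `λ*` satisfies
`λ* = max { x A y y : xᵀx = 1, yᵀy = 1 }`. -/
theorem stmt4 {n : ℕ} (a : Fin n → Fin n → Fin n → ℝ)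
    (hA : ∀ i j k, a i j k = a i k j)
    (lamstar : ℝ)
    (hmem : ∃ x y : Fin n → ℝ, CEig a lamstar x y)
    (hmax : ∀ lam : ℝ, (∃ x y : Fin n → ℝ, CEig a lam x y) → lam ≤ lamstar) :
    IsGreatest {r : ℝ | ∃ x y : Fin n → ℝ, (∑ i, x i * x i = 1) ∧ (∑ i, y i * y i = 1) ∧
      r = ∑ i, ∑ j, ∑ k, a i j k * x i * y j * y k} lamstar := by
  constructor
  · obtain ⟨x, y, h1, -, h3, h4⟩ := hmem
    refine ⟨x, y, h3, h4, ?_⟩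
    rw [F_lin]
    simp only [dotProduct, h1]
    simp only [mul_assoc, ← Finset.mul_sum, h3, mul_one]
  · obtain ⟨x, y, -, -, h3, h4⟩ := hmem
    obtain ⟨⟨x0, y0⟩, ⟨hx0, hy0⟩, hm⟩ := ((isCompact_unit n).prod (isCompact_unit n)).exists_isMaxOn
      ⟨(x, y), h3, h4⟩
      (f := fun p : (Fin n → ℝ) × (Fin n → ℝ) => ∑ i, ∑ j, ∑ k, a i j k * p.1 i * p.2 j * p.2 k)
      (by fun_prop)
    have hm' : ∀ u v : Fin n → ℝ, u ⬝ᵥ u = 1 → v ⬝ᵥ v = 1 →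
        ∑ i, ∑ j, ∑ k, a i j k * u i * v j * v k
          ≤ ∑ i, ∑ j, ∑ k, a i j k * x0 i * y0 j * y0 k :=
      fun u v hu hv => isMaxOn_iff.1 hm (u, v) ⟨hu, hv⟩
    have hle := hmax (∑ i, ∑ j, ∑ k, a i j k * x0 i * y0 j * y0 k) ⟨x0, y0, ?_, ?_, hx0, hy0⟩
    · rintro r ⟨u, v, hu, hv, rfl⟩
      exact (hm' u v hu hv).trans hle
    · have := lin_crit _ x0 _ hx0 (F_lin a x0 y0).symm
        (fun u hu => by rw [← F_lin]; exact hm' u y0 hu hy0)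
      intro i
      exact congrFun this i
    · have := quad_crit _ (by ext j k; simp [hA _ j k]) y0 _ hy0 (F_quad a x0 y0).symm
        (fun v hv => by rw [← F_quad]; exact hm' x0 v hx0 hv)
      intro i
      have := congrFun this i
      rw [Pi.smul_apply, smul_eq_mul] at this
      rw [← this, Finset.sum_comm]
      simp only [Matrix.mulVec, dotProduct, Matrix.of_apply, Finset.sum_mul]
      refine Finset.sum_congr rfl fun k _ => Finset.sum_congr rfl fun j _ => by rw [hA j k i]
end

section
/- (Theorem 2.1) Let A = (a_{ijk}) ∈ ℝ^{n×n×n} (n ≥ 1) be a piezoelectric-type tensor and let λ be a C-eigenvalue of A. Then −ρ ≤ λ ≤ ρ, where ρ := max_{i,j∈N} (R_i^{(1)}(A) · R_j^{(3)}(A))^{1/2}, R_i^{(1)}(A) := Σ_{l,k∈N} |a_{ilk}| and R_j^{(3)}(A) := Σ_{l,k∈N} |a_{lkj}|. -/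
open Finset

/-- `R_i^{(1)}(A) = ∑_{l,k} |a_{ilk}|`. -/
noncomputable def R1 {n : ℕ} (a : Fin n → Fin n → Fin n → ℝ) (i : Fin n) : ℝ :=
  ∑ l, ∑ k, |a i l k|

/-- `R_j^{(3)}(A) = ∑_{l,k} |a_{lkj}|`. -/
noncomputable def R3 {n : ℕ} (a : Fin n → Fin n → Fin n → ℝ) (j : Fin n) : ℝ :=
  ∑ l, ∑ k, |a l k j|

/-- `ρ = max_{i,j} (R_i^{(1)}(A) R_j^{(3)}(A))^{1/2}`. -/
noncomputable def rho {n : ℕ} (hn : 0 < n) (a : Fin n → Fin n → Fin n → ℝ) : ℝ :=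
  Finset.univ.sup' (Finset.univ_nonempty_iff.mpr ⟨(⟨0, hn⟩, ⟨0, hn⟩)⟩)
    (fun p : Fin n × Fin n => Real.sqrt (R1 a p.1 * R3 a p.2))

/-- Theorem 2.1: every C-eigenvalue `λ` satisfies `-ρ ≤ λ ≤ ρ`. -/
theorem stmt5 {n : ℕ} (hn : 0 < n) (a : Fin n → Fin n → Fin n → ℝ)
    (hA : ∀ i j k, a i j k = a i k j)
    (lam : ℝ) (x y : Fin n → ℝ) (h : CEig a lam x y) :
    -(rho hn a) ≤ lam ∧ lam ≤ rho hn a := by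
  obtain ⟨h1, h2, h3, h4⟩ := h
  have hne : (Finset.univ : Finset (Fin n)).Nonempty := ⟨⟨0, hn⟩, Finset.mem_univ _⟩
  obtain ⟨p, -, hp⟩ := Finset.exists_max_image Finset.univ (fun i => |x i|) hne
  obtain ⟨q, -, hq⟩ := Finset.exists_max_image Finset.univ (fun i => |y i|) hne
  have hp' : ∀ i, |x i| ≤ |x p| := fun i => hp i (Finset.mem_univ i)
  have hq' : ∀ i, |y i| ≤ |y q| := fun i => hq i (Finset.mem_univ i)
  have hxp : 0 < |x p| := by
    rw [abs_pos]
    intro h0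
    have hz : ∀ i, x i = 0 := fun i => by simpa [h0] using hp' i
    simp [hz] at h3
  have hyq : 0 < |y q| := by
    rw [abs_pos]
    intro h0
    have hz : ∀ i, y i = 0 := fun i => by simpa [h0] using hq' i
    simp [hz] at h4
  have hy1 : ∀ i, |y i| ≤ 1 := fun i => by
    have hs : y i * y i ≤ ∑ i, y i * y i :=
      Finset.single_le_sum (f := fun i => y i * y i)
        (fun j _ => mul_self_nonneg (y j)) (Finset.mem_univ i)
    rw [h4] at hs
    rw [abs_le]
    constructor <;> nlinarith
  have e1 : |lam| * |x p| ≤ R1 a p * |y q| := by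
    rw [← abs_mul, ← h1 p, R1, Finset.sum_mul]
    refine (Finset.abs_sum_le_sum_abs _ _).trans (Finset.sum_le_sum fun j _ => ?_)
    rw [Finset.sum_mul]
    refine (Finset.abs_sum_le_sum_abs _ _).trans (Finset.sum_le_sum fun k _ => ?_)
    rw [abs_mul, abs_mul, mul_assoc]
    refine mul_le_mul_of_nonneg_left ?_ (abs_nonneg _)
    calc |y j| * |y k| ≤ |y q| * 1 :=
          mul_le_mul (hq' j) (hy1 k) (abs_nonneg _) (abs_nonneg _)
      _ = |y q| := mul_one _
  have e2 : |lam| * |y q| ≤ R3 a q * |x p| := by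
    rw [← abs_mul, ← h2 q, R3, Finset.sum_mul]
    refine (Finset.abs_sum_le_sum_abs _ _).trans (Finset.sum_le_sum fun j _ => ?_)
    rw [Finset.sum_mul]
    refine (Finset.abs_sum_le_sum_abs _ _).trans (Finset.sum_le_sum fun k _ => ?_)
    rw [abs_mul, abs_mul, mul_assoc]
    refine mul_le_mul_of_nonneg_left ?_ (abs_nonneg _)
    calc |x j| * |y k| ≤ |x p| * 1 :=
          mul_le_mul (hp' j) (hy1 k) (abs_nonneg _) (abs_nonneg _)
      _ = |x p| := mul_one _
  have hm := mul_le_mul e1 e2 (by positivity) ((by positivity : 0 ≤ |lam| * |x p|).trans e1)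
  have hl : |lam| ^ 2 ≤ R1 a p * R3 a q := by
    refine le_of_mul_le_mul_right ?_ (mul_pos hxp hyq)
    linarith
  have hr : |lam| ≤ rho hn a :=
    (Real.le_sqrt_of_sq_le hl).trans
      (Finset.le_sup' (fun p : Fin n × Fin n => Real.sqrt (R1 a p.1 * R3 a p.2))
        (Finset.mem_univ (p, q)))
  exact abs_le.mp hr
end

section
/- (Corollary 2.1) Let A = (a_{ijk}) ∈ ℝ^{n×n×n} (n ≥ 1) be a piezoelectric-type tensor and let λ* be the largest C-eigenvalue of A (a C-eigenvalue such that every C-eigenvalue λ satisfies λ ≤ λ*). Then λ* ≤ ρ, where ρ := max_{i,j∈N} (R_i^{(1)}(A) · R_j^{(3)}(A))^{1/2}, R_i^{(1)}(A) := Σ_{l,k∈N} |a_{ilk}| and R_j^{(3)}(A) := Σ_{l,k∈N} |a_{lkj}|. -/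
open Finset

theorem bilin_bound {n : ℕ} (b : Fin n → Fin n → ℝ) (u v : Fin n → ℝ) (U V : ℝ)
    (hU : ∀ i, |u i| ≤ U) (hV : ∀ i, |v i| ≤ V) :
    |∑ j, ∑ k, b j k * u j * v k| ≤ (∑ j, ∑ k, |b j k|) * (U * V) := by
  rw [Finset.sum_mul]
  refine (Finset.abs_sum_le_sum_abs _ _).trans (Finset.sum_le_sum fun j _ => ?_)
  rw [Finset.sum_mul]
  refine (Finset.abs_sum_le_sum_abs _ _).trans (Finset.sum_le_sum fun k _ => ?_)
  rw [abs_mul, abs_mul, mul_assoc]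
  have h0 : 0 ≤ U := (abs_nonneg _).trans (hU j)
  exact mul_le_mul_of_nonneg_left
    (mul_le_mul (hU j) (hV k) (abs_nonneg _) h0) (abs_nonneg _)

theorem max_pos_of_unit {n : ℕ} (x : Fin n → ℝ) (h : ∑ i, x i * x i = 1) (p : Fin n)
    (hp : ∀ i, |x i| ≤ |x p|) : 0 < |x p| := by
  by_contra hc
  have h0 : ∀ i, x i = 0 := fun i => by
    have := hp i
    exact abs_eq_zero.mp (le_antisymm (by linarith) (abs_nonneg _))
  simp [h0] at h

/-- Corollary 2.1: the largest C-eigenvalue `λ*` satisfies `λ* ≤ ρ`. -/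
theorem stmt6 {n : ℕ} (hn : 0 < n) (a : Fin n → Fin n → Fin n → ℝ)
    (hA : ∀ i j k, a i j k = a i k j)
    (lamstar : ℝ)
    (hmem : ∃ x y : Fin n → ℝ, CEig a lamstar x y)
    (hmax : ∀ lam : ℝ, (∃ x y : Fin n → ℝ, CEig a lam x y) → lam ≤ lamstar) :
    lamstar ≤ rho hn a := by
  obtain ⟨x, y, h1, h2, hx, hy⟩ := hmem
  haveI : Nonempty (Fin n) := ⟨⟨0, hn⟩⟩
  obtain ⟨p, hp⟩ := Finite.exists_max (fun i => |x i|)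
  obtain ⟨q, hq⟩ := Finite.exists_max (fun i => |y i|)
  have hX := max_pos_of_unit x hx p hp
  have hY := max_pos_of_unit y hy q hq
  have hY1 : |y q| * |y q| ≤ 1 := by
    rw [abs_mul_abs_self, ← hy]
    exact Finset.single_le_sum (f := fun i => y i * y i)
      (fun i _ => mul_self_nonneg _) (Finset.mem_univ q)
  have b1 := bilin_bound (fun j k => a p j k) y y _ _ hq hq
  have b2 := bilin_bound (fun j k => a j k q) x y _ _ hp hq
  rw [h1, abs_mul] at b1
  rw [h2, abs_mul] at b2
  change _ ≤ R1 a p * _ at b1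
  change _ ≤ R3 a q * _ at b2
  have n1 : 0 ≤ R1 a p :=
    Finset.sum_nonneg fun _ _ => Finset.sum_nonneg fun _ _ => abs_nonneg _
  have n3 : 0 ≤ R3 a q :=
    Finset.sum_nonneg fun _ _ => Finset.sum_nonneg fun _ _ => abs_nonneg _
  have c1 : |lamstar| * |x p| ≤ R1 a p :=
    b1.trans (mul_le_of_le_one_right n1 hY1)
  have c2 : |lamstar| ≤ R3 a q * |x p| := by
    rw [← mul_assoc] at b2
    exact le_of_mul_le_mul_right b2 hY
  have c3 : lamstar ^ 2 ≤ R1 a p * R3 a q := by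
    have h := mul_le_mul c1 c2 (abs_nonneg _) n1
    rw [← sq_abs]
    refine le_of_mul_le_mul_right ?_ hX
    calc |lamstar| ^ 2 * |x p| = |lamstar| * |x p| * |lamstar| := by ring
      _ ≤ _ := h
      _ = _ := by ring
  refine (Real.le_sqrt_of_sq_le c3).trans ?_
  exact Finset.le_sup' (fun p : Fin n × Fin n => Real.sqrt (R1 a p.1 * R3 a p.2))
    (Finset.mem_univ (p, q))
end

section
/- (Inequality (2.6)) Let A = (a_{ijk}) ∈ ℝ^{n×n×n} be a piezoelectric-type tensor, λ a C-eigenvalue of A with associated left and right C-eigenvectors x and y, and let p, q ∈ N be indices with |x_p| = max_{i∈N} |x_i| and |y_q| = max_{i∈N} |y_i|. Then |λ| ≤ (R_p^{(1)}(A) · R_q^{(3)}(A))^{1/2}, where R_p^{(1)}(A) := Σ_{l,k∈N} |a_{plk}| and R_q^{(3)}(A) := Σ_{l,k∈N} |a_{lkq}|. -/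
open Finset

/-- Inequality (2.6): `|λ| ≤ (R_p^{(1)}(A) R_q^{(3)}(A))^{1/2}`. -/
theorem stmt9 {n : ℕ} (a : Fin n → Fin n → Fin n → ℝ)
    (hA : ∀ i j k, a i j k = a i k j)
    (lam : ℝ) (x y : Fin n → ℝ) (h : CEig a lam x y)
    (p q : Fin n) (hp : ∀ i, |x i| ≤ |x p|) (hq : ∀ i, |y i| ≤ |y q|) :
    |lam| ≤ Real.sqrt (R1 a p * R3 a q) := by
  obtain ⟨h1, h2, h3, h4⟩ := h
  have key : ∀ (b : Fin n → Fin n → ℝ) (u v : Fin n → ℝ) (U V : ℝ),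
      (∀ i, |u i| ≤ U) → (∀ i, |v i| ≤ V) → 0 ≤ U →
      |∑ j, ∑ k, b j k * u j * v k| ≤ (∑ j, ∑ k, |b j k|) * (U * V) := by
    intro b u v U V hu hv hU
    rw [Finset.sum_mul]
    refine (Finset.abs_sum_le_sum_abs _ _).trans (Finset.sum_le_sum fun j _ => ?_)
    rw [Finset.sum_mul]
    refine (Finset.abs_sum_le_sum_abs _ _).trans (Finset.sum_le_sum fun k _ => ?_)
    rw [mul_assoc, abs_mul, abs_mul]
    exact mul_le_mul_of_nonneg_left (mul_le_mul (hu j) (hv k) (abs_nonneg _) hU) (abs_nonneg _)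
  have pos : ∀ (u : Fin n → ℝ) (r : Fin n), (∀ i, |u i| ≤ |u r|) →
      ∑ i, u i * u i = 1 → 0 < |u r| := by
    intro u r hr hs
    rcases (abs_nonneg (u r)).lt_or_eq with h0 | h0
    · exact h0
    · exfalso
      have hz : ∀ i, u i = 0 := fun i =>
        abs_eq_zero.mp (le_antisymm ((hr i).trans h0.symm.le) (abs_nonneg _))
      simp [hz] at hs
  have hX := pos x p hp h3
  have hY := pos y q hq h4
  have hY1 : |y q| ≤ 1 := by
    have := Finset.single_le_sum (f := fun i => y i * y i)
      (fun i _ => mul_self_nonneg (y i)) (Finset.mem_univ q)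
    rw [h4] at this
    exact abs_le_one_iff_mul_self_le_one.mpr this
  have e1 := key (fun j k => a p j k) y y _ _ hq hq hY.le
  have e2 := key (fun j k => a j k q) x y _ _ hp hq hX.le
  simp only [h1, h2] at e1 e2
  change _ ≤ R1 a p * _ at e1
  change _ ≤ R3 a q * _ at e2
  rw [abs_mul] at e1 e2
  have r1 : 0 ≤ R1 a p := Finset.sum_nonneg fun _ _ => Finset.sum_nonneg fun _ _ => abs_nonneg _
  have r3 : 0 ≤ R3 a q := Finset.sum_nonneg fun _ _ => Finset.sum_nonneg fun _ _ => abs_nonneg _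
  have e3 : |lam| ≤ R3 a q * |x p| := by
    refine le_of_mul_le_mul_right ?_ hY
    rw [mul_assoc]; exact e2
  have e4 : |lam| * |x p| ≤ R1 a p := by
    refine e1.trans (mul_le_of_le_one_right r1 ?_)
    exact mul_le_one₀ hY1 hY.le hY1
  apply Real.le_sqrt_of_sq_le
  calc |lam| ^ 2 = |lam| * |lam| := sq _
    _ ≤ |lam| * (R3 a q * |x p|) := mul_le_mul_of_nonneg_left e3 (abs_nonneg _)
    _ = (|lam| * |x p|) * R3 a q := by ring
    _ ≤ R1 a p * R3 a q := mul_le_mul_of_nonneg_right e4 r3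
end

section
/- (Theorem 2.2, first part) Let A = (a_{ijk}) ∈ ℝ^{n×n×n} (n ≥ 1) be a piezoelectric-type tensor, λ a C-eigenvalue of A, and S ⊆ N any subset. Then −ρ_S ≤ λ ≤ ρ_S, where ρ_S := max_{i,j∈N} (1/2)( R_j^{Δ_S,(3)}(A) + ( (R_j^{Δ_S,(3)}(A))² + 4 R_i^{(1)}(A) R_j^{Δ̄_S,(3)}(A) )^{1/2} ), with Δ_S := {(l,k) : l ∈ S or k ∈ S}, Δ̄_S := {(l,k) : l ∉ S and k ∉ S}, R_i^{(1)}(A) := Σ_{l,k∈N} |a_{ilk}|, R_j^{Δ_S,(3)}(A) := Σ_{(l,k)∈Δ_S} |a_{lkj}|, and R_j^{Δ̄_S,(3)}(A) := Σ_{(l,k)∈Δ̄_S} |a_{lkj}|. -/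
open Finset

/-- `R_j^{Δ_S,(3)}(A) = ∑_{(l,k) : l ∈ S or k ∈ S} |a_{lkj}|`. -/
noncomputable def R3D {n : ℕ} (a : Fin n → Fin n → Fin n → ℝ) (S : Finset (Fin n))
    (j : Fin n) : ℝ :=
  ∑ l, ∑ k, if l ∈ S ∨ k ∈ S then |a l k j| else 0

/-- `R_j^{Δ̄_S,(3)}(A) = ∑_{(l,k) : l ∉ S and k ∉ S} |a_{lkj}|`. -/
noncomputable def R3Dbar {n : ℕ} (a : Fin n → Fin n → Fin n → ℝ) (S : Finset (Fin n))
    (j : Fin n) : ℝ :=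
  ∑ l, ∑ k, if l ∉ S ∧ k ∉ S then |a l k j| else 0

/-- `ρ_S = max_{i,j} (1/2)(R_j^{Δ_S,(3)} + ((R_j^{Δ_S,(3)})² + 4 R_i^{(1)} R_j^{Δ̄_S,(3)})^{1/2})`. -/
noncomputable def rhoS {n : ℕ} (hn : 0 < n) (a : Fin n → Fin n → Fin n → ℝ)
    (S : Finset (Fin n)) : ℝ :=
  Finset.univ.sup' (Finset.univ_nonempty_iff.mpr ⟨(⟨0, hn⟩, ⟨0, hn⟩)⟩)
    (fun p : Fin n × Fin n =>
      (1 / 2) * (R3D a S p.2 +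
        Real.sqrt ((R3D a S p.2) ^ 2 + 4 * R1 a p.1 * R3Dbar a S p.2)))

/-- Theorem 2.2 (first part): every C-eigenvalue `λ` satisfies `-ρ_S ≤ λ ≤ ρ_S`
for every subset `S` of `N`. -/
theorem stmt10 {n : ℕ} (hn : 0 < n) (a : Fin n → Fin n → Fin n → ℝ)
    (hA : ∀ i j k, a i j k = a i k j)
    (lam : ℝ) (x y : Fin n → ℝ) (h : CEig a lam x y)
    (S : Finset (Fin n)) :
    -(rhoS hn a S) ≤ lam ∧ lam ≤ rhoS hn a S := by
  obtain ⟨h1, h2, hx, hy⟩ := h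
  haveI : Nonempty (Fin n) := ⟨⟨0, hn⟩⟩
  obtain ⟨p, hp⟩ := Finite.exists_max (fun i => |x i|)
  obtain ⟨q, hq⟩ := Finite.exists_max (fun i => |y i|)
  have unit_le : ∀ z : Fin n → ℝ, ∑ i, z i * z i = 1 → ∀ i, |z i| ≤ 1 := by
    intro z hz i
    have h3 : z i * z i ≤ ∑ i, z i * z i :=
      Finset.single_le_sum (f := fun i => z i * z i)
        (fun j _ => mul_self_nonneg (z j)) (Finset.mem_univ i)
    rw [hz] at h3
    exact abs_le_one_iff_mul_self_le_one.mpr h3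
  have hx1 := unit_le x hx
  have hy1 := unit_le y hy
  have hq0 : 0 < |y q| := by
    rcases (abs_nonneg (y q)).eq_or_lt with h0 | h0
    · exfalso
      have hz : ∀ i, y i = 0 := fun i =>
        abs_eq_zero.mp (le_antisymm (by rw [h0]; exact hq i) (abs_nonneg _))
      simp [hz] at hy
    · exact h0
  have e1 : |lam| * |x p| ≤ R1 a p * |y q| := by
    rw [← abs_mul, ← h1 p, R1, Finset.sum_mul]
    refine (Finset.abs_sum_le_sum_abs _ _).trans (Finset.sum_le_sum fun l _ => ?_)
    rw [Finset.sum_mul]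
    refine (Finset.abs_sum_le_sum_abs _ _).trans (Finset.sum_le_sum fun k _ => ?_)
    rw [abs_mul, abs_mul, mul_assoc]
    refine mul_le_mul_of_nonneg_left ?_ (abs_nonneg _)
    calc |y l| * |y k| ≤ 1 * |y q| :=
          mul_le_mul (hy1 l) (hq k) (abs_nonneg _) zero_le_one
      _ = |y q| := one_mul _
  have e2 : |lam| * |y q| ≤ R3D a S q * |y q| + R3Dbar a S q * |x p| := by
    rw [← abs_mul, ← h2 q, R3D, R3Dbar, Finset.sum_mul, Finset.sum_mul,
      ← Finset.sum_add_distrib]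
    refine (Finset.abs_sum_le_sum_abs _ _).trans (Finset.sum_le_sum fun l _ => ?_)
    rw [Finset.sum_mul, Finset.sum_mul, ← Finset.sum_add_distrib]
    refine (Finset.abs_sum_le_sum_abs _ _).trans (Finset.sum_le_sum fun k _ => ?_)
    rw [abs_mul, abs_mul, mul_assoc]
    by_cases hS : l ∈ S ∨ k ∈ S
    · have hS2 : ¬ (l ∉ S ∧ k ∉ S) := by tauto
      rw [if_pos hS, if_neg hS2, zero_mul, add_zero]
      refine mul_le_mul_of_nonneg_left ?_ (abs_nonneg _)
      calc |x l| * |y k| ≤ 1 * |y q| :=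
            mul_le_mul (hx1 l) (hq k) (abs_nonneg _) zero_le_one
        _ = |y q| := one_mul _
    · have hS2 : l ∉ S ∧ k ∉ S := by tauto
      rw [if_neg hS, if_pos hS2, zero_mul, zero_add]
      refine mul_le_mul_of_nonneg_left ?_ (abs_nonneg _)
      calc |x l| * |y k| ≤ |x p| * 1 :=
            mul_le_mul (hp l) (hy1 k) (abs_nonneg _) (abs_nonneg _)
        _ = |x p| := mul_one _
  have hB : 0 ≤ R3Dbar a S q := by
    unfold R3Dbar
    refine Finset.sum_nonneg fun l _ => Finset.sum_nonneg fun k _ => ?_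
    split_ifs <;> positivity
  have e3 : |lam| ^ 2 ≤ R3D a S q * |lam| + R1 a p * R3Dbar a S q := by
    refine le_of_mul_le_mul_right ?_ hq0
    have f1 := mul_le_mul_of_nonneg_left e2 (abs_nonneg lam)
    have f2 := mul_le_mul_of_nonneg_left e1 hB
    linarith
  have e4 : 2 * |lam| - R3D a S q ≤
      Real.sqrt ((R3D a S q) ^ 2 + 4 * R1 a p * R3Dbar a S q) := by
    apply Real.le_sqrt_of_sq_le
    linarith
  have e5 : (1 / 2) * (R3D a S q +
      Real.sqrt ((R3D a S q) ^ 2 + 4 * R1 a p * R3Dbar a S q)) ≤ rhoS hn a S :=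
    Finset.le_sup' (fun p : Fin n × Fin n =>
      (1 / 2) * (R3D a S p.2 +
        Real.sqrt ((R3D a S p.2) ^ 2 + 4 * R1 a p.1 * R3Dbar a S p.2)))
      (Finset.mem_univ (p, q))
  exact abs_le.mp (by linarith)
end

section
/- (Theorem 2.2, second part) Let A = (a_{ijk}) ∈ ℝ^{n×n×n} (n ≥ 1) be a piezoelectric-type tensor and λ a C-eigenvalue of A. Then −ρ_min ≤ λ ≤ ρ_min, where ρ_min := min_{S⊆N} ρ_S and ρ_S := max_{i,j∈N} (1/2)( R_j^{Δ_S,(3)}(A) + ( (R_j^{Δ_S,(3)}(A))² + 4 R_i^{(1)}(A) R_j^{Δ̄_S,(3)}(A) )^{1/2} ). -/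
open Finset

/-- `ρ_min = min_{S ⊆ N} ρ_S`. -/
noncomputable def rhoMin {n : ℕ} (hn : 0 < n) (a : Fin n → Fin n → Fin n → ℝ) : ℝ :=
  Finset.univ.inf' (Finset.univ_nonempty_iff.mpr ⟨(∅ : Finset (Fin n))⟩) (rhoS hn a)

/-- Theorem 2.2 (second part): every C-eigenvalue `λ` satisfies `-ρ_min ≤ λ ≤ ρ_min`. -/
theorem stmt11 {n : ℕ} (hn : 0 < n) (a : Fin n → Fin n → Fin n → ℝ)
    (hA : ∀ i j k, a i j k = a i k j)
    (lam : ℝ) (x y : Fin n → ℝ) (h : CEig a lam x y) :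
    -(rhoMin hn a) ≤ lam ∧ lam ≤ rhoMin hn a := by
  have key : ∀ S : Finset (Fin n), |lam| ≤ rhoS hn a S := by
    intro S
    obtain ⟨h1, h2, h3, h4⟩ := h
    haveI : Nonempty (Fin n) := ⟨⟨0, hn⟩⟩
    obtain ⟨p, hp⟩ := Finite.exists_max (fun i => |x i|)
    obtain ⟨q, hq⟩ := Finite.exists_max (fun i => |y i|)
    have hle : ∀ z : Fin n → ℝ, ∑ i, z i * z i = 1 → ∀ i, |z i| ≤ 1 := by
      intro z hz i
      have := Finset.single_le_sum (f := fun i => z i * z i)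
        (fun i _ => mul_self_nonneg (z i)) (Finset.mem_univ i)
      rw [hz] at this
      apply abs_le_one_iff_mul_self_le_one.mpr this
    have hx1 := hle x h3
    have hy1 := hle y h4
    have hy0 : 0 < |y q| := by
      by_contra hc
      have h0 : ∀ i, y i = 0 := fun i =>
        abs_eq_zero.mp (le_antisymm ((hq i).trans (not_lt.mp hc)) (abs_nonneg _))
      simp [h0] at h4
    have hX : |lam| * |x p| ≤ R1 a p := by
      rw [← abs_mul, ← h1 p, R1]
      refine (Finset.abs_sum_le_sum_abs _ _).trans (Finset.sum_le_sum fun j _ => ?_)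
      refine (Finset.abs_sum_le_sum_abs _ _).trans (Finset.sum_le_sum fun k _ => ?_)
      rw [abs_mul, abs_mul, mul_assoc]
      exact mul_le_of_le_one_right (abs_nonneg _)
        (mul_le_one₀ (hy1 j) (abs_nonneg _) (hy1 k))
    have hY : |lam| * |y q| ≤ (R3D a S q + R3Dbar a S q * |x p|) * |y q| := by
      rw [← abs_mul, ← h2 q, R3D, R3Dbar, Finset.sum_mul, ← Finset.sum_add_distrib,
        Finset.sum_mul]
      refine (Finset.abs_sum_le_sum_abs _ _).trans (Finset.sum_le_sum fun j _ => ?_)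
      rw [Finset.sum_mul, ← Finset.sum_add_distrib, Finset.sum_mul]
      refine (Finset.abs_sum_le_sum_abs _ _).trans (Finset.sum_le_sum fun k _ => ?_)
      rw [abs_mul, abs_mul]
      refine mul_le_mul ?_ (hq k) (abs_nonneg _) ?_
      · by_cases hc : j ∈ S ∨ k ∈ S
        · have hd : ¬ (j ∉ S ∧ k ∉ S) := by tauto
          rw [if_pos hc, if_neg hd]
          simpa using mul_le_of_le_one_right (abs_nonneg (a j k q)) (hx1 j)
        · have hd : j ∉ S ∧ k ∉ S := by tauto
          rw [if_neg hc, if_pos hd, zero_add]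
          exact mul_le_mul_of_nonneg_left (hp j) (abs_nonneg _)
      · split_ifs <;> positivity
    have hY' := le_of_mul_le_mul_right hY hy0
    have hB : 0 ≤ R3Dbar a S q := by
      unfold R3Dbar
      refine Finset.sum_nonneg fun j _ => Finset.sum_nonneg fun k _ => ?_
      split_ifs <;> positivity
    have hquad : |lam| * |lam| ≤ |lam| * R3D a S q + R1 a p * R3Dbar a S q := by
      have e1 := mul_le_mul_of_nonneg_left hY' (abs_nonneg lam)
      have e2 := mul_le_mul_of_nonneg_left hX hB
      linarith
    have hs : 2 * |lam| - R3D a S q ≤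
        Real.sqrt ((R3D a S q) ^ 2 + 4 * R1 a p * R3Dbar a S q) := by
      apply Real.le_sqrt_of_sq_le
      linarith
    have hm := Finset.le_sup' (fun p : Fin n × Fin n =>
      (1 / 2) * (R3D a S p.2 +
        Real.sqrt ((R3D a S p.2) ^ 2 + 4 * R1 a p.1 * R3Dbar a S p.2)))
      (Finset.mem_univ (p, q))
    refine le_trans ?_ hm
    simp only
    linarith
  have : |lam| ≤ rhoMin hn a := by
    unfold rhoMin
    exact Finset.le_inf' _ _ fun S _ => key S
  exact abs_le.mp this
end

section
/- (Inequality (2.7)) Let A = (a_{ijk}) ∈ ℝ^{n×n×n} be a piezoelectric-type tensor, λ a C-eigenvalue of A with associated left and right C-eigenvectors x and y, S ⊆ N any subset, and let p, q ∈ N be indices with |x_p| = max_{i∈N} |x_i| and |y_q| = max_{i∈N} |y_i|. Then (|λ| − R_q^{Δ_S,(3)}(A)) · |y_q| ≤ R_q^{Δ̄_S,(3)}(A) · |x_p|, where R_q^{Δ_S,(3)}(A) := Σ_{(l,k)∈Δ_S} |a_{lkq}| and R_q^{Δ̄_S,(3)}(A) := Σ_{(l,k)∈Δ̄_S} |a_{lkq}|.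 -/
open Finset

/-- Inequality (2.7): `(|λ| - R_q^{Δ_S,(3)}(A)) |y_q| ≤ R_q^{Δ̄_S,(3)}(A) |x_p|`. -/
theorem stmt12 {n : ℕ} (a : Fin n → Fin n → Fin n → ℝ)
    (hA : ∀ i j k, a i j k = a i k j)
    (lam : ℝ) (x y : Fin n → ℝ) (h : CEig a lam x y)
    (S : Finset (Fin n))
    (p q : Fin n) (hp : ∀ i, |x i| ≤ |x p|) (hq : ∀ i, |y i| ≤ |y q|) :
    (|lam| - R3D a S q) * |y q| ≤ R3Dbar a S q * |x p| := by
  obtain ⟨_, h2, hx, hy⟩ := h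
  have bd : ∀ z : Fin n → ℝ, (∑ i, z i * z i = 1) → ∀ i, |z i| ≤ 1 := by
    intro z hz i
    have h1 : z i * z i ≤ ∑ i, z i * z i :=
      Finset.single_le_sum (f := fun i => z i * z i)
        (fun j _ => mul_self_nonneg (z j)) (Finset.mem_univ i)
    rw [abs_le_one_iff_mul_self_le_one]
    linarith
  have hx1 := bd x hx
  have hy1 := bd y hy
  have key : |lam| * |y q| ≤ R3D a S q * |y q| + R3Dbar a S q * |x p| := by
    rw [← abs_mul, ← h2 q]
    unfold R3D R3Dbar
    simp only [Finset.sum_mul]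
    rw [← Finset.sum_add_distrib]
    refine (Finset.abs_sum_le_sum_abs _ _).trans (Finset.sum_le_sum fun l _ => ?_)
    rw [← Finset.sum_add_distrib]
    refine (Finset.abs_sum_le_sum_abs _ _).trans (Finset.sum_le_sum fun k _ => ?_)
    rw [abs_mul, abs_mul, mul_assoc]
    by_cases hS : l ∈ S ∨ k ∈ S
    · have hS' : ¬ (l ∉ S ∧ k ∉ S) := by tauto
      rw [if_pos hS, if_neg hS', zero_mul, add_zero]
      refine mul_le_mul_of_nonneg_left ?_ (abs_nonneg _)
      exact (mul_le_of_le_one_left (abs_nonneg _) (hx1 l)).trans (hq k)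
    · have hS' : l ∉ S ∧ k ∉ S := by tauto
      rw [if_neg hS, if_pos hS', zero_mul, zero_add]
      refine mul_le_mul_of_nonneg_left ?_ (abs_nonneg _)
      exact (mul_le_of_le_one_right (abs_nonneg _) (hy1 k)).trans (hp l)
  linarith [sub_mul |lam| (R3D a S q) |y q|]
end

section
/- (Inequality (2.8)) Let A = (a_{ijk}) ∈ ℝ^{n×n×n} be a piezoelectric-type tensor, λ a C-eigenvalue of A with associated left and right C-eigenvectors x and y, S ⊆ N any subset, and let p, q ∈ N be indices with |x_p| = max_{i∈N} |x_i| and |y_q| = max_{i∈N} |y_i|. Then |λ| · (|λ| − R_q^{Δ_S,(3)}(A)) ≤ R_p^{(1)}(A) · R_q^{Δ̄_S,(3)}(A), where R_p^{(1)}(A) := Σ_{l,k∈N} |a_{plk}|, R_q^{Δ_S,(3)}(A) := Σ_{(l,k)∈Δ_S} |a_{lkq}| and R_q^{Δ̄_S,(3)}(A) := Σ_{(l,k)∈Δ̄_S} |a_{lkq}|. -/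
open Finset

/-- Inequality (2.8): `|λ| (|λ| - R_q^{Δ_S,(3)}(A)) ≤ R_p^{(1)}(A) R_q^{Δ̄_S,(3)}(A)`. -/
theorem stmt13 {n : ℕ} (a : Fin n → Fin n → Fin n → ℝ)
    (hA : ∀ i j k, a i j k = a i k j)
    (lam : ℝ) (x y : Fin n → ℝ) (h : CEig a lam x y)
    (S : Finset (Fin n))
    (p q : Fin n) (hp : ∀ i, |x i| ≤ |x p|) (hq : ∀ i, |y i| ≤ |y q|) :
    |lam| * (|lam| - R3D a S q) ≤ R1 a p * R3Dbar a S q := by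
  obtain ⟨h1, h2, hx, hy⟩ := h
  have le_one : ∀ (z : Fin n → ℝ), ∑ i, z i * z i = 1 → ∀ i, |z i| ≤ 1 := by
    intro z hz i
    have := Finset.single_le_sum (f := fun i => z i * z i)
      (fun j _ => mul_self_nonneg (z j)) (Finset.mem_univ i)
    simp only [hz] at this
    rw [abs_le_one_iff_mul_self_le_one]
    exact this
  have hxp := le_one x hx p
  have hyq := le_one y hy q
  have hypos : 0 < |y q| := by
    rcases (abs_nonneg (y q)).lt_or_eq with h0 | h0
    · exact h0
    · exfalso
      have hz : ∀ i, y i = 0 := fun i =>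
        abs_nonpos_iff.mp (by rw [h0]; exact hq i)
      simp [hz] at hy
  have hsplit : ∑ l, ∑ k, |a l k q| = R3D a S q + R3Dbar a S q := by
    unfold R3D R3Dbar
    simp only [← Finset.sum_add_distrib]
    refine Finset.sum_congr rfl fun l _ => Finset.sum_congr rfl fun k _ => ?_
    by_cases hl : l ∈ S <;> by_cases hk : k ∈ S <;> simp [hl, hk]
  have hD : 0 ≤ R3D a S q := Finset.sum_nonneg fun l _ => Finset.sum_nonneg fun k _ => by
    split_ifs <;> positivity
  have hDb : 0 ≤ R3Dbar a S q := Finset.sum_nonneg fun l _ => Finset.sum_nonneg fun k _ => by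
    split_ifs <;> positivity
  have hR1 : 0 ≤ R1 a p := Finset.sum_nonneg fun l _ => Finset.sum_nonneg fun k _ => abs_nonneg _
  have e1 : |lam| * |x p| ≤ R1 a p := by
    rw [← abs_mul, ← h1 p]
    refine (Finset.abs_sum_le_sum_abs _ _).trans (Finset.sum_le_sum fun j _ => ?_)
    refine (Finset.abs_sum_le_sum_abs _ _).trans (Finset.sum_le_sum fun k _ => ?_)
    rw [abs_mul, abs_mul, mul_assoc]
    exact mul_le_of_le_one_right (abs_nonneg _)
      (mul_le_one₀ (le_one y hy j) (abs_nonneg _) (le_one y hy k))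
  have e2 : |lam| * |y q| ≤ (R3D a S q + R3Dbar a S q) * |x p| * |y q| := by
    rw [← hsplit, ← abs_mul, ← h2 q]
    simp only [Finset.sum_mul]
    refine (Finset.abs_sum_le_sum_abs _ _).trans (Finset.sum_le_sum fun j _ => ?_)
    refine (Finset.abs_sum_le_sum_abs _ _).trans (Finset.sum_le_sum fun k _ => ?_)
    rw [abs_mul, abs_mul]
    have := hp j
    have := hq k
    gcongr
  have e3 : |lam| ≤ (R3D a S q + R3Dbar a S q) * |x p| := le_of_mul_le_mul_right e2 hypos
  have e4 : |lam| - R3D a S q ≤ R3Dbar a S q * |x p| := by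
    have := mul_le_of_le_one_right hD hxp
    linarith
  calc |lam| * (|lam| - R3D a S q) ≤ |lam| * (R3Dbar a S q * |x p|) :=
        mul_le_mul_of_nonneg_left e4 (abs_nonneg _)
    _ = (|lam| * |x p|) * R3Dbar a S q := by ring
    _ ≤ R1 a p * R3Dbar a S q := mul_le_mul_of_nonneg_right e1 hDb
end

section
/- Let A = (a_{ijk}) ∈ ℝ^{n×n×n} be a piezoelectric-type tensor, λ a C-eigenvalue of A with associated left and right C-eigenvectors x and y, S ⊆ N any subset, and let p, q ∈ N be indices with |x_p| = max_{i∈N} |x_i| and |y_q| = max_{i∈N} |y_i|. Then |λ| ≤ (1/2)( R_q^{Δ_S,(3)}(A) + ( (R_q^{Δ_S,(3)}(A))² + 4 R_p^{(1)}(A) R_q^{Δ̄_S,(3)}(A) )^{1/2} ). -/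
open Finset

/-- `|λ| ≤ (1/2)(R_q^{Δ_S,(3)} + ((R_q^{Δ_S,(3)})² + 4 R_p^{(1)} R_q^{Δ̄_S,(3)})^{1/2})`. -/
theorem stmt14 {n : ℕ} (a : Fin n → Fin n → Fin n → ℝ)
    (hA : ∀ i j k, a i j k = a i k j)
    (lam : ℝ) (x y : Fin n → ℝ) (h : CEig a lam x y)
    (S : Finset (Fin n))
    (p q : Fin n) (hp : ∀ i, |x i| ≤ |x p|) (hq : ∀ i, |y i| ≤ |y q|) :
    |lam| ≤ (1 / 2) * (R3D a S q +
      Real.sqrt ((R3D a S q) ^ 2 + 4 * R1 a p * R3Dbar a S q)) := by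
  obtain ⟨h1, h2, h3, h4⟩ := h
  have hone : ∀ (z : Fin n → ℝ), ∑ i, z i * z i = 1 → ∀ i, |z i| ≤ 1 := by
    intro z hz i
    have := Finset.single_le_sum (f := fun i => z i * z i)
      (fun j _ => mul_self_nonneg (z j)) (Finset.mem_univ i)
    simp only [hz] at this
    rw [abs_le_one_iff_mul_self_le_one]
    exact this
  have hx1 := hone x h3 p
  have hy1 := hone y h4 q
  have hyq : 0 < |y q| := by
    rcases (abs_nonneg (y q)).lt_or_eq with h0 | h0
    · exact h0
    · exfalso
      have hz : ∀ i, y i = 0 := fun i => by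
        have := hq i
        rw [← h0] at this
        exact abs_nonpos_iff.mp this
      simp [hz] at h4
  have hB : 0 ≤ R3Dbar a S q := by
    unfold R3Dbar
    refine Finset.sum_nonneg fun l _ => Finset.sum_nonneg fun k _ => ?_
    split_ifs
    · exact abs_nonneg _
    · exact le_rfl
  have hR : 0 ≤ R1 a p := by
    unfold R1
    exact Finset.sum_nonneg fun l _ => Finset.sum_nonneg fun k _ => abs_nonneg _
  have e1 : |lam| * |x p| ≤ R1 a p := by
    rw [← abs_mul, ← h1 p]
    unfold R1
    refine (Finset.abs_sum_le_sum_abs _ _).trans (Finset.sum_le_sum fun l _ => ?_)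
    refine (Finset.abs_sum_le_sum_abs _ _).trans (Finset.sum_le_sum fun k _ => ?_)
    rw [abs_mul, abs_mul, mul_assoc]
    exact mul_le_of_le_one_right (abs_nonneg _)
      (mul_le_one₀ (hone y h4 l) (abs_nonneg _) (hone y h4 k))
  have e2 : |lam| * |y q| ≤ (R3D a S q + R3Dbar a S q * |x p|) * |y q| := by
    rw [← abs_mul, ← h2 q]
    unfold R3D R3Dbar
    rw [Finset.sum_mul, ← Finset.sum_add_distrib, Finset.sum_mul]
    refine (Finset.abs_sum_le_sum_abs _ _).trans (Finset.sum_le_sum fun l _ => ?_)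
    rw [Finset.sum_mul, ← Finset.sum_add_distrib, Finset.sum_mul]
    refine (Finset.abs_sum_le_sum_abs _ _).trans (Finset.sum_le_sum fun k _ => ?_)
    rw [abs_mul, abs_mul]
    refine mul_le_mul ?_ (hq k) (abs_nonneg _) ?_
    · by_cases hc : l ∈ S ∨ k ∈ S
      · have hc' : ¬ (l ∉ S ∧ k ∉ S) := by tauto
        rw [if_pos hc, if_neg hc', zero_mul, add_zero]
        exact mul_le_of_le_one_right (abs_nonneg _) (hone x h3 l)
      · have hc' : (l ∉ S ∧ k ∉ S) := by tauto
        rw [if_neg hc, if_pos hc', zero_add]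
        exact mul_le_mul_of_nonneg_left (hp l) (abs_nonneg _)
    · split_ifs <;> positivity
  have e3 := le_of_mul_le_mul_right e2 hyq
  have e4 : |lam| * |lam| ≤ |lam| * R3D a S q + R1 a p * R3Dbar a S q := by
    have t1 := mul_le_mul_of_nonneg_left e3 (abs_nonneg lam)
    have t2 := mul_le_mul_of_nonneg_right e1 hB
    nlinarith
  have e5 : 2 * |lam| - R3D a S q ≤
      Real.sqrt ((R3D a S q) ^ 2 + 4 * R1 a p * R3Dbar a S q) := by
    apply Real.le_sqrt_of_sq_le
    nlinarith
  linarith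
end

section
/- (Theorem 2.3) Let A = (a_{ijk}) ∈ ℝ^{n×n×n} (n ≥ 1) be a piezoelectric-type tensor. Then ρ_min ≤ ρ, where ρ := max_{i,j∈N} (R_i^{(1)}(A) · R_j^{(3)}(A))^{1/2} and ρ_min := min_{S⊆N} ρ_S; consequently [−ρ_min, ρ_min] ⊆ [−ρ, ρ], and every C-eigenvalue λ of A lies in [−ρ_min, ρ_min]. -/
open Finset

/-- With `S` empty, `ρ_S ≤ ρ`. -/
lemma rhoS_empty_le {n : ℕ} (hn : 0 < n) (a : Fin n → Fin n → Fin n → ℝ) :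
    rhoS hn a ∅ ≤ rho hn a := by
  unfold rhoS
  apply Finset.sup'_le
  intro p _
  have h1 : R3D a ∅ p.2 = 0 := by simp [R3D]
  have h2 : R3Dbar a ∅ p.2 = R3 a p.2 := by simp [R3Dbar, R3]
  have h3 : (1 / 2) * (R3D a ∅ p.2 +
        Real.sqrt ((R3D a ∅ p.2) ^ 2 + 4 * R1 a p.1 * R3Dbar a ∅ p.2))
        = Real.sqrt (R1 a p.1 * R3 a p.2) := by
    rw [h1, h2]
    have : (0:ℝ) ^ 2 + 4 * R1 a p.1 * R3 a p.2 = 2 ^ 2 * (R1 a p.1 * R3 a p.2) := by ring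
    rw [this, Real.sqrt_mul (by norm_num), Real.sqrt_sq (by norm_num)]
    ring
  rw [h3]
  exact Finset.le_sup' (fun p : Fin n × Fin n => Real.sqrt (R1 a p.1 * R3 a p.2))
    (Finset.mem_univ p)

/-- Each coordinate of a unit vector has modulus at most one. -/
lemma abs_coord_le_one {n : ℕ} (x : Fin n → ℝ) (hx : ∑ i, x i * x i = 1) (i : Fin n) :
    |x i| ≤ 1 := by
  have h : x i * x i ≤ ∑ i, x i * x i :=
    Finset.single_le_sum (f := fun i => x i * x i) (fun i _ => mul_self_nonneg _)
      (Finset.mem_univ i)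
  rw [hx] at h
  apply abs_le_of_sq_le_sq' _ zero_le_one |> abs_le.mpr
  nlinarith

/-- Every C-eigenvalue is bounded in modulus by `ρ_S`. -/
lemma abs_le_rhoS {n : ℕ} (hn : 0 < n) (a : Fin n → Fin n → Fin n → ℝ) (S : Finset (Fin n))
    (lam : ℝ) (x y : Fin n → ℝ) (h : CEig a lam x y) : |lam| ≤ rhoS hn a S := by
  obtain ⟨e1, e2, hx, hy⟩ := h
  haveI : Nonempty (Fin n) := ⟨⟨0, hn⟩⟩
  obtain ⟨i, hi⟩ := Finite.exists_max (fun i => |x i|)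
  obtain ⟨j, hj⟩ := Finite.exists_max (fun j => |y j|)
  have hx1 := abs_coord_le_one x hx
  have hy1 := abs_coord_le_one y hy
  have hm : 0 < |y j| := by
    rcases (abs_nonneg (y j)).lt_or_eq with h0 | h0
    · exact h0
    · exfalso
      have hz : ∀ k, y k = 0 := fun k =>
        abs_eq_zero.mp (le_antisymm (by rw [h0]; exact hj k) (abs_nonneg _))
      simp [hz] at hy
  have b1 : |lam| * |x i| ≤ R1 a i := by
    rw [← abs_mul, ← e1 i]
    unfold R1
    refine (Finset.abs_sum_le_sum_abs _ _).trans (Finset.sum_le_sum fun l _ => ?_)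
    refine (Finset.abs_sum_le_sum_abs _ _).trans (Finset.sum_le_sum fun k _ => ?_)
    rw [abs_mul, abs_mul]
    exact mul_le_of_le_one_right (abs_nonneg _) (hy1 k) |>.trans' (by
      gcongr
      exact mul_le_of_le_one_right (abs_nonneg _) (hy1 l))
  have b2 : |lam| * |y j| ≤ (R3D a S j + R3Dbar a S j * |x i|) * |y j| := by
    rw [← abs_mul, ← e2 j]
    unfold R3D R3Dbar
    rw [Finset.sum_mul, ← Finset.sum_add_distrib, Finset.sum_mul]
    refine (Finset.abs_sum_le_sum_abs _ _).trans (Finset.sum_le_sum fun l _ => ?_)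
    rw [Finset.sum_mul, ← Finset.sum_add_distrib, Finset.sum_mul]
    refine (Finset.abs_sum_le_sum_abs _ _).trans (Finset.sum_le_sum fun k _ => ?_)
    rw [abs_mul, abs_mul]
    have hk := hj k
    have hl := hi l
    by_cases hS : l ∈ S ∨ k ∈ S
    · have hS' : ¬ (l ∉ S ∧ k ∉ S) := by tauto
      rw [if_pos hS, if_neg hS', zero_mul, add_zero]
      gcongr
      exact mul_le_of_le_one_right (abs_nonneg _) (hx1 l)
    · have hS' : l ∉ S ∧ k ∉ S := by tauto
      rw [if_neg hS, if_pos hS', zero_add]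
      gcongr
  have b3 : |lam| ≤ R3D a S j + R3Dbar a S j * |x i| := le_of_mul_le_mul_right b2 hm
  have hR : 0 ≤ R3Dbar a S j :=
    Finset.sum_nonneg fun l _ => Finset.sum_nonneg fun k _ => by split_ifs <;> positivity
  have b4 : |lam| * |lam| ≤ R3D a S j * |lam| + R3Dbar a S j * R1 a i := by
    have := mul_le_mul_of_nonneg_right b3 (abs_nonneg lam)
    have := mul_le_mul_of_nonneg_left b1 hR
    nlinarith
  have b5 : 2 * |lam| - R3D a S j ≤
      Real.sqrt ((R3D a S j) ^ 2 + 4 * R1 a i * R3Dbar a S j) := by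
    apply Real.le_sqrt_of_sq_le
    nlinarith
  have b6 : |lam| ≤ (1 / 2) * (R3D a S j +
      Real.sqrt ((R3D a S j) ^ 2 + 4 * R1 a i * R3Dbar a S j)) := by linarith
  exact b6.trans (Finset.le_sup' (fun p : Fin n × Fin n =>
      (1 / 2) * (R3D a S p.2 +
        Real.sqrt ((R3D a S p.2) ^ 2 + 4 * R1 a p.1 * R3Dbar a S p.2)))
    (Finset.mem_univ (i, j)))

/-- Theorem 2.3: `ρ_min ≤ ρ`, hence `[-ρ_min, ρ_min] ⊆ [-ρ, ρ]`, and every C-eigenvalue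
lies in `[-ρ_min, ρ_min]`. -/
theorem stmt16 {n : ℕ} (hn : 0 < n) (a : Fin n → Fin n → Fin n → ℝ)
    (hA : ∀ i j k, a i j k = a i k j) :
    rhoMin hn a ≤ rho hn a ∧
    Set.Icc (-(rhoMin hn a)) (rhoMin hn a) ⊆ Set.Icc (-(rho hn a)) (rho hn a) ∧
    ∀ (lam : ℝ) (x y : Fin n → ℝ), CEig a lam x y →
      lam ∈ Set.Icc (-(rhoMin hn a)) (rhoMin hn a) := by
  have h1 : rhoMin hn a ≤ rho hn a :=
    (Finset.inf'_le (rhoS hn a) (Finset.mem_univ ∅)).trans (rhoS_empty_le hn a)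
  refine ⟨h1, Set.Icc_subset_Icc (neg_le_neg h1) h1, fun lam x y h => ?_⟩
  rw [Set.mem_Icc, ← abs_le]
  exact Finset.le_inf' _ _ fun S _ => abs_le_rhoS hn a S lam x y h
end

section
/- (Corollary 2.2) Let A = (a_{ijk}) ∈ ℝ^{n×n×n} (n ≥ 1) be a piezoelectric-type tensor and let λ* be the largest C-eigenvalue of A (a C-eigenvalue such that every C-eigenvalue λ satisfies λ ≤ λ*). Then λ* ≤ ρ_min, where ρ_min := min_{S⊆N} ρ_S and ρ_S := max_{i,j∈N} (1/2)( R_j^{Δ_S,(3)}(A) + ( (R_j^{Δ_S,(3)}(A))² + 4 R_i^{(1)}(A) R_j^{Δ̄_S,(3)}(A) )^{1/2} ). -/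
open Finset

/-- Corollary 2.2: the largest C-eigenvalue `λ*` satisfies `λ* ≤ ρ_min`. -/
theorem stmt17 {n : ℕ} (hn : 0 < n) (a : Fin n → Fin n → Fin n → ℝ)
    (hA : ∀ i j k, a i j k = a i k j)
    (lamstar : ℝ)
    (hmem : ∃ x y : Fin n → ℝ, CEig a lamstar x y)
    (hmax : ∀ lam : ℝ, (∃ x y : Fin n → ℝ, CEig a lam x y) → lam ≤ lamstar) :
    lamstar ≤ rhoMin hn a := by
  obtain ⟨x, y, h1, h2, hx, hy⟩ := hmem
  have : Nonempty (Fin n) := ⟨⟨0, hn⟩⟩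
  unfold rhoMin
  refine (Finset.le_inf'_iff _ _).2 fun S _ => ?_
  obtain ⟨p, hp⟩ := Finite.exists_max (fun i => |x i|)
  obtain ⟨q, hq⟩ := Finite.exists_max (fun i => |y i|)
  have hx1 : ∀ i, |x i| ≤ 1 := by
    intro i
    have h := Finset.single_le_sum (f := fun i => x i * x i)
      (fun i _ => mul_self_nonneg (x i)) (Finset.mem_univ i)
    simp only [hx] at h
    exact abs_le_one_iff_mul_self_le_one.2 h
  have hy1 : ∀ i, |y i| ≤ 1 := by
    intro i
    have h := Finset.single_le_sum (f := fun i => y i * y i)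
      (fun i _ => mul_self_nonneg (y i)) (Finset.mem_univ i)
    simp only [hy] at h
    exact abs_le_one_iff_mul_self_le_one.2 h
  have hq0 : 0 < |y q| := by
    by_contra hc
    have hz : ∀ i, y i = 0 := fun i => abs_nonpos_iff.1 ((hq i).trans (not_lt.1 hc))
    simp [hz] at hy
  have hD : 0 ≤ R3D a S q := by
    unfold R3D
    refine Finset.sum_nonneg fun l _ => Finset.sum_nonneg fun k _ => ?_
    split_ifs <;> positivity
  have hB : 0 ≤ R3Dbar a S q := by
    unfold R3Dbar
    refine Finset.sum_nonneg fun l _ => Finset.sum_nonneg fun k _ => ?_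
    split_ifs <;> positivity
  have e1 : lamstar * |x p| ≤ R1 a p := by
    calc lamstar * |x p| ≤ |lamstar * x p| := by
          rw [abs_mul]; exact mul_le_mul_of_nonneg_right (le_abs_self _) (abs_nonneg _)
      _ = |∑ j, ∑ k, a p j k * y j * y k| := by rw [h1 p]
      _ ≤ ∑ j, |∑ k, a p j k * y j * y k| := Finset.abs_sum_le_sum_abs _ _
      _ ≤ R1 a p := by
          unfold R1
          refine Finset.sum_le_sum fun j _ => (Finset.abs_sum_le_sum_abs _ _).trans
            (Finset.sum_le_sum fun k _ => ?_)
          rw [abs_mul, abs_mul, mul_assoc]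
          exact mul_le_of_le_one_right (abs_nonneg _)
            (mul_le_one₀ (hy1 j) (abs_nonneg _) (hy1 k))
  have e2 : lamstar * |y q| ≤ (R3D a S q + R3Dbar a S q * |x p|) * |y q| := by
    calc lamstar * |y q| ≤ |lamstar * y q| := by
          rw [abs_mul]; exact mul_le_mul_of_nonneg_right (le_abs_self _) (abs_nonneg _)
      _ = |∑ j, ∑ k, a j k q * x j * y k| := by rw [h2 q]
      _ ≤ ∑ j, |∑ k, a j k q * x j * y k| := Finset.abs_sum_le_sum_abs _ _
      _ ≤ (R3D a S q + R3Dbar a S q * |x p|) * |y q| := by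
          unfold R3D R3Dbar
          simp only [Finset.sum_mul, ← Finset.sum_add_distrib]
          refine Finset.sum_le_sum fun j _ => (Finset.abs_sum_le_sum_abs _ _).trans
            (Finset.sum_le_sum fun k _ => ?_)
          rw [abs_mul, abs_mul]
          by_cases hS : j ∈ S ∨ k ∈ S
          · have hS' : ¬ (j ∉ S ∧ k ∉ S) := by tauto
            rw [if_pos hS, if_neg hS', zero_mul, add_zero]
            exact mul_le_mul (mul_le_of_le_one_right (abs_nonneg _) (hx1 j)) (hq k)
              (abs_nonneg _) (abs_nonneg _)
          · have hS' : j ∉ S ∧ k ∉ S := by tauto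
            rw [if_neg hS, if_pos hS', zero_add]
            exact mul_le_mul (mul_le_mul_of_nonneg_left (hp j) (abs_nonneg _)) (hq k)
              (abs_nonneg _) (by positivity)
  have e3 := le_of_mul_le_mul_right e2 hq0
  have key : lamstar ≤ (1 / 2) * (R3D a S q +
        Real.sqrt ((R3D a S q) ^ 2 + 4 * R1 a p * R3Dbar a S q)) := by
    rcases le_total lamstar 0 with h0 | h0
    · have := Real.sqrt_nonneg ((R3D a S q) ^ 2 + 4 * R1 a p * R3Dbar a S q)
      linarith
    · have e4 : lamstar * lamstar ≤ lamstar * (R3D a S q + R3Dbar a S q * |x p|) :=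
        mul_le_mul_of_nonneg_left e3 h0
      have e5 := mul_le_mul_of_nonneg_right e1 hB
      have := Real.le_sqrt_of_sq_le (x := 2 * lamstar - R3D a S q)
        (y := (R3D a S q) ^ 2 + 4 * R1 a p * R3Dbar a S q) (by nlinarith)
      linarith
  unfold rhoS
  exact key.trans (Finset.le_sup' (fun p : Fin n × Fin n =>
      (1 / 2) * (R3D a S p.2 +
        Real.sqrt ((R3D a S p.2) ^ 2 + 4 * R1 a p.1 * R3Dbar a S p.2))) (Finset.mem_univ (p, q)))
end
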